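/- Let N ≥ 3 be an integer and let D ⊆ S^{N-1} be a Borel measurable subset of the unit sphere, with Σ_D = {s·q : q ∈ D, s > 0} the cone spanned by D. Then for every continuously differentiable function v : ℝ^N → ℝ with compact support, ((N-2)²/4) · ∫_{Σ_D} v(x)²/|x|² dx ≤ ∫_{Σ_D} |∇v(x)|² dx. -/

import Mathlib

open MeasureTheory Real Set

/-!
The inequality holds ray by ray. In polar coordinates `x = r • q` the cone is `D × (0, ∞)`, so it
suffices to prove, for each `q` on the sphere, the weighted one-dimensional Hardy inequality
`((m+1)/2)² ∫₀^∞ u² r^m dr ≤ ∫₀^∞ u'² r^(m+2) dr` for `u r = v (r • q)` and `m = N - 3`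
(`hardy_Ioi`), and to use `|u' r| ≤ ‖fderiv ℝ v (r • q)‖`. With `a = (m+1)/2`, the one-dimensional
inequality follows by integrating the identity
`u'² r^(m+2) - a² u² r^m = r^m (r u' + a u)² - (a u² r^(m+1))'`,
whose last term integrates to zero.

The passage to polar coordinates (`lintegral_polar`) is carried out with lower Lebesgue integrals,
so that integrability of `v² / |x|²` is not needed.
-/

theorem hardy_Ioi (m : ℕ) (u : ℝ → ℝ) (hu : ContDiff ℝ 1 u) (huc : HasCompactSupport u) :
    ∫ r in Ioi (0 : ℝ), (((m : ℝ) + 1) / 2) ^ 2 * u r ^ 2 * r ^ m ≤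
      ∫ r in Ioi (0 : ℝ), deriv u r ^ 2 * r ^ (m + 2) := by
  set a : ℝ := ((m : ℝ) + 1) / 2 with ha
  have hcu : Continuous u := hu.continuous
  have hcd : Continuous (deriv u) := hu.continuous_deriv le_rfl
  have hdc : HasCompactSupport (deriv u) := huc.deriv
  have i1 : Integrable (fun r => a ^ 2 * u r ^ 2 * r ^ m) := by
    refine Continuous.integrable_of_hasCompactSupport (by fun_prop) (huc.mono ?_)
    intro r hr h
    simp_all
  have i2 : Integrable (fun r => deriv u r ^ 2 * r ^ (m + 2)) := by
    refine Continuous.integrable_of_hasCompactSupport (by fun_prop) (hdc.mono ?_)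
    intro r hr h
    simp_all
  have i3 : Integrable (fun r => 2 * a * u r * deriv u r * r ^ (m + 1)
      + 2 * a ^ 2 * u r ^ 2 * r ^ m) := by
    refine Continuous.integrable_of_hasCompactSupport (by fun_prop) (huc.mono ?_)
    intro r hr h
    simp_all
  have hder : ∀ r, HasDerivAt (fun r => a * u r ^ 2 * r ^ (m + 1))
      (2 * a * u r * deriv u r * r ^ (m + 1) + 2 * a ^ 2 * u r ^ 2 * r ^ m) r := by
    intro r
    have h := (((hu.differentiable one_ne_zero r).hasDerivAt.pow 2).const_mul a).mul
      (hasDerivAt_pow (m + 1) r)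
    refine h.congr_deriv ?_
    have hm : (m : ℝ) + 1 = 2 * a := by
      rw [ha]
      ring
    simp only [Pi.pow_apply, Nat.add_sub_cancel, Nat.cast_add, Nat.cast_one, hm]
    push_cast
    ring
  have hzero : ∫ r in Ioi (0 : ℝ), (2 * a * u r * deriv u r * r ^ (m + 1)
      + 2 * a ^ 2 * u r ^ 2 * r ^ m) = 0 := by
    have hs : HasCompactSupport (fun r => a * u r ^ 2 * r ^ (m + 1)) := by
      refine huc.mono ?_
      intro r hr h
      simp_all
    have := hs.integral_Ioi_deriv_eq (b := 0) (by
      rw [contDiff_one_iff_deriv]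
      refine ⟨fun r => (hder r).differentiableAt, ?_⟩
      rw [funext fun r => (hder r).deriv]
      fun_prop)
    rw [funext fun r => (hder r).deriv] at this
    simpa using this
  have hmono : ∫ r in Ioi (0 : ℝ), a ^ 2 * u r ^ 2 * r ^ m ≤
      ∫ r in Ioi (0 : ℝ), (deriv u r ^ 2 * r ^ (m + 2)
        + (2 * a * u r * deriv u r * r ^ (m + 1) + 2 * a ^ 2 * u r ^ 2 * r ^ m)) := by
    refine setIntegral_mono_on i1.integrableOn (i2.add i3).integrableOn measurableSet_Ioi ?_
    intro r hr
    have h0 : 0 ≤ r ^ m * (r * deriv u r + a * u r) ^ 2 :=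
      mul_nonneg (pow_nonneg (le_of_lt hr) _) (sq_nonneg _)
    have : deriv u r ^ 2 * r ^ (m + 2)
        + (2 * a * u r * deriv u r * r ^ (m + 1) + 2 * a ^ 2 * u r ^ 2 * r ^ m)
        = a ^ 2 * u r ^ 2 * r ^ m + r ^ m * (r * deriv u r + a * u r) ^ 2 := by ring
    linarith
  rwa [integral_add i2.integrableOn i3.integrableOn, hzero, add_zero] at hmono

theorem lintegral_polar {E : Type*} [NormedAddCommGroup E] [NormedSpace ℝ E]
    [FiniteDimensional ℝ E] [Nontrivial E] [MeasurableSpace E] [BorelSpace E]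
    (μ : Measure E) [μ.IsAddHaarMeasure] (g : E → ENNReal) (hg : Measurable g) :
    ∫⁻ x, g x ∂μ = ∫⁻ q : Metric.sphere (0 : E) 1,
      (∫⁻ r in Ioi (0 : ℝ), ENNReal.ofReal (r ^ (Module.finrank ℝ E - 1)) * g (r • (q : E)))
        ∂μ.toSphere := by
  have hm : Measurable fun p : Metric.sphere (0 : E) 1 × Ioi (0 : ℝ) =>
      g ((p.2 : ℝ) • (p.1 : E)) := by fun_prop
  calc ∫⁻ x, g x ∂μ = ∫⁻ x : ({0}ᶜ : Set E), g x ∂(μ.comap (↑)) := by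
        rw [lintegral_subtype_comap (measurableSet_singleton _).compl,
          restrict_compl_singleton]
    _ = ∫⁻ x : ({0}ᶜ : Set E), g (((homeomorphUnitSphereProd E x).2 : ℝ) •
          ((homeomorphUnitSphereProd E x).1 : E)) ∂(μ.comap (↑)) := by
        refine lintegral_congr fun x => ?_
        congr 1
        have hx : ‖(x : E)‖ ≠ 0 := norm_ne_zero_iff.2 x.2
        simp [smul_smul, hx]
    _ = ∫⁻ p, g ((p.2 : ℝ) • (p.1 : E))
          ∂(μ.toSphere.prod (Measure.volumeIoiPow (Module.finrank ℝ E - 1))) :=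
        μ.measurePreserving_homeomorphUnitSphereProd.lintegral_comp hm
    _ = _ := by
        rw [lintegral_prod _ hm.aemeasurable]
        refine lintegral_congr fun q => ?_
        rw [Measure.volumeIoiPow, lintegral_withDensity_eq_lintegral_mul _ (by fun_prop)
          (by fun_prop)]
        exact lintegral_subtype_comap measurableSet_Ioi (fun r : ℝ =>
          ENNReal.ofReal (r ^ (Module.finrank ℝ E - 1)) * g (r • (q : E)))

/-- Hardy inequality on an unbounded cone (variant of Proposition 2.1). -/
theorem hardy_inequality_cone
    (N : ℕ) (hN : 3 ≤ N)
    (D : Set (EuclideanSpace ℝ (Fin N)))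
    (hD : D ⊆ Metric.sphere (0 : EuclideanSpace ℝ (Fin N)) 1)
    (hDmeas : MeasurableSet D)
    (v : EuclideanSpace ℝ (Fin N) → ℝ)
    (hv : ContDiff ℝ 1 v) (hvc : HasCompactSupport v) :
    ((N : ℝ) - 2) ^ 2 / 4 *
      ∫ x in ({x | ∃ q ∈ D, ∃ s : ℝ, 0 < s ∧ x = s • q} : Set (EuclideanSpace ℝ (Fin N))),
        v x ^ 2 / ‖x‖ ^ 2 ≤
    ∫ x in ({x | ∃ q ∈ D, ∃ s : ℝ, 0 < s ∧ x = s • q} : Set (EuclideanSpace ℝ (Fin N))),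
        ‖fderiv ℝ v x‖ ^ 2 := by
  obtain ⟨m, rfl⟩ : ∃ m, N = m + 3 := ⟨N - 3, by omega⟩
  set S : Set (EuclideanSpace ℝ (Fin (m + 3))) :=
    {x | ∃ q ∈ D, ∃ s : ℝ, 0 < s ∧ x = s • q} with hS
  have hmem : ∀ x, x ∈ S ↔ x ≠ 0 ∧ ‖x‖⁻¹ • x ∈ D := by
    intro x
    constructor
    · rintro ⟨q, hq, s, hs, rfl⟩
      have hq1 : ‖q‖ = 1 := by simpa using hD hq
      have hq0 : q ≠ 0 := by
        rintro rfl
        simp at hq1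
      refine ⟨smul_ne_zero hs.ne' hq0, ?_⟩
      rw [norm_smul, hq1, smul_smul, mul_one, Real.norm_of_nonneg hs.le,
        inv_mul_cancel₀ hs.ne', one_smul]
      exact hq
    · rintro ⟨hx, hxD⟩
      refine ⟨_, hxD, ‖x‖, norm_pos_iff.2 hx, ?_⟩
      rw [smul_smul, mul_inv_cancel₀ (norm_ne_zero_iff.2 hx), one_smul]
  have hSm : MeasurableSet S := by
    have : S = {0}ᶜ ∩ (fun x : EuclideanSpace ℝ (Fin (m + 3)) => ‖x‖⁻¹ • x) ⁻¹' D := by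
      ext x
      simp [hmem]
    rw [this]
    exact (measurableSet_singleton _).compl.inter
      ((by fun_prop : Measurable fun x : EuclideanSpace ℝ (Fin (m + 3)) => ‖x‖⁻¹ • x) hDmeas)
  have hcv : Continuous v := hv.continuous
  have hcf : Continuous (fderiv ℝ v) := hv.continuous_fderiv one_ne_zero
  have hmv : Measurable v := hcv.measurable
  set f : EuclideanSpace ℝ (Fin (m + 3)) → ℝ :=
    fun x => (((m + 3 : ℕ) : ℝ) - 2) ^ 2 / 4 * (v x ^ 2 / ‖x‖ ^ 2) with hf
  have hfm : Measurable f := by fun_prop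
  have hgc : Continuous (fun x => ‖fderiv ℝ v x‖ ^ 2) := by fun_prop
  have hgm : Measurable (fun x => ‖fderiv ℝ v x‖ ^ 2) := hgc.measurable
  have hgi : Integrable (fun x => ‖fderiv ℝ v x‖ ^ 2) := by
    refine hgc.integrable_of_hasCompactSupport ((hvc.fderiv ℝ).mono ?_)
    intro x hx h
    simp_all
  rw [← integral_const_mul,
    integral_eq_lintegral_of_nonneg_ae (f := f) (.of_forall fun x => by simp only [hf]; positivity)
      hfm.aestronglyMeasurable,
    integral_eq_lintegral_of_nonneg_ae (.of_forall fun x => by positivity)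
      hgm.aestronglyMeasurable]
  refine ENNReal.toReal_mono ?_ ?_
  · rw [← ofReal_integral_eq_lintegral_ofReal hgi.integrableOn (.of_forall fun x => by positivity)]
    exact ENNReal.ofReal_ne_top
  rw [← lintegral_indicator hSm, ← lintegral_indicator hSm,
    lintegral_polar _ _ (hfm.ennreal_ofReal.indicator hSm),
    lintegral_polar _ _ (hgm.ennreal_ofReal.indicator hSm)]
  refine lintegral_mono fun q => ?_
  have hq1 : ‖(q : EuclideanSpace ℝ (Fin (m + 3)))‖ = 1 := by simp
  have hq0 : (q : EuclideanSpace ℝ (Fin (m + 3))) ≠ 0 := norm_ne_zero_iff.1 (by simp)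
  have hray : ∀ r : ℝ, 0 < r → (r • (q : EuclideanSpace ℝ (Fin (m + 3))) ∈ S ↔
      (q : EuclideanSpace ℝ (Fin (m + 3))) ∈ D) := by
    intro r hr
    rw [hmem, norm_smul, hq1, smul_smul, mul_one, Real.norm_of_nonneg hr.le,
        inv_mul_cancel₀ hr.ne', one_smul]
    exact and_iff_right (smul_ne_zero hr.ne' hq0)
  have hfin : Module.finrank ℝ (EuclideanSpace ℝ (Fin (m + 3))) - 1 = m + 2 := by simp
  rw [hfin]
  by_cases hqD : (q : EuclideanSpace ℝ (Fin (m + 3))) ∈ D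
  swap
  · refine setLIntegral_mono' measurableSet_Ioi fun r hr => ?_
    rw [indicator_of_notMem (by rwa [hray r hr])]
    simp
  set u : ℝ → ℝ := fun r => v (r • (q : EuclideanSpace ℝ (Fin (m + 3)))) with hu
  have huC : ContDiff ℝ 1 u := hv.comp (contDiff_id.smul contDiff_const)
  have huc : HasCompactSupport u :=
    hvc.comp_isClosedEmbedding (isClosedEmbedding_smul_left hq0)
  have hud : ∀ r, deriv u r ^ 2 ≤
      ‖fderiv ℝ v (r • (q : EuclideanSpace ℝ (Fin (m + 3))))‖ ^ 2 := by
    intro r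
    have h1 : HasDerivAt (fun r : ℝ => r • (q : EuclideanSpace ℝ (Fin (m + 3))))
        (q : EuclideanSpace ℝ (Fin (m + 3))) r := by
      simpa using (hasDerivAt_id r).smul_const (q : EuclideanSpace ℝ (Fin (m + 3)))
    have h2 := ((hv.differentiable one_ne_zero _).hasFDerivAt.comp_hasDerivAt r h1).deriv
    have h3 : deriv u r = fderiv ℝ v (r • (q : EuclideanSpace ℝ (Fin (m + 3)))) q := h2
    rw [h3, ← sq_abs, ← Real.norm_eq_abs]
    gcongr
    simpa [hq1] using (fderiv ℝ v (r • (q : EuclideanSpace ℝ (Fin (m + 3))))).le_opNorm q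
  have hcu : Continuous u := huC.continuous
  have hcd : Continuous (deriv u) := huC.continuous_deriv le_rfl
  have i1 : Integrable (fun r => (((m : ℝ) + 1) / 2) ^ 2 * u r ^ 2 * r ^ m) := by
    refine Continuous.integrable_of_hasCompactSupport (by fun_prop) (huc.mono ?_)
    intro r hr h
    simp_all
  have i2 : Integrable (fun r => deriv u r ^ 2 * r ^ (m + 2)) := by
    refine Continuous.integrable_of_hasCompactSupport (by fun_prop) (huc.deriv.mono ?_)
    intro r hr h
    simp_all
  calc _ = ∫⁻ r in Ioi (0 : ℝ),
          ENNReal.ofReal ((((m : ℝ) + 1) / 2) ^ 2 * u r ^ 2 * r ^ m) := by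
        refine setLIntegral_congr_fun measurableSet_Ioi fun r hr => ?_
        have hr0 : (0 : ℝ) < r := hr
        rw [indicator_of_mem (by rwa [hray r hr]),
          ← ENNReal.ofReal_mul (pow_nonneg hr0.le _)]
        congr 1
        simp only [hf, hu, norm_smul, hq1, mul_one, Real.norm_of_nonneg hr0.le]
        push_cast
        field_simp
        ring
    _ = ENNReal.ofReal (∫ r in Ioi (0 : ℝ), (((m : ℝ) + 1) / 2) ^ 2 * u r ^ 2 * r ^ m) := by
        refine (ofReal_integral_eq_lintegral_ofReal i1.integrableOn ?_).symm
        filter_upwards [ae_restrict_mem measurableSet_Ioi] with r hr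
        have hr0 : (0 : ℝ) < r := hr
        simp only [Pi.zero_apply]
        positivity
    _ ≤ ENNReal.ofReal (∫ r in Ioi (0 : ℝ), deriv u r ^ 2 * r ^ (m + 2)) :=
        ENNReal.ofReal_le_ofReal (hardy_Ioi m u huC huc)
    _ = ∫⁻ r in Ioi (0 : ℝ), ENNReal.ofReal (deriv u r ^ 2 * r ^ (m + 2)) := by
        refine ofReal_integral_eq_lintegral_ofReal i2.integrableOn ?_
        filter_upwards [ae_restrict_mem measurableSet_Ioi] with r hr
        have hr0 : (0 : ℝ) < r := hr
        simp only [Pi.zero_apply]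
        positivity
    _ ≤ _ := by
        refine setLIntegral_mono' measurableSet_Ioi fun r hr => ?_
        have hr0 : (0 : ℝ) < r := hr
        rw [indicator_of_mem (by rwa [hray r hr]),
          ← ENNReal.ofReal_mul (pow_nonneg hr0.le _)]
        refine ENNReal.ofReal_le_ofReal ?_
        rw [mul_comm]
        exact mul_le_mul_of_nonneg_left (hud r) (pow_nonneg hr0.le _)
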